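/- arXiv:math/0512220 — 4 statements merged into one kernel-verified Lean document; each statement's English description precedes it below -/
import Mathlib

section
/- Let κ be a regular uncountable cardinal, Γ a chain, G = (ℝ^Γ)_κ the κ-bounded Hahn group, and K = ℝ((G))_κ. Every order isomorphism ι : Γ → G^{<0} (where G^{<0} is the chain of strictly negative elements of G) lifts to an isomorphism of ordered groups ι̂ : (G,+) → (Neg(K),+) defined by ι̂(Σ_{γ∈Γ} g_γ 1_γ) = Σ_{γ∈Γ} g_γ t^{ι(γ)}; in particular the right-hand side is a well-defined element of K (its support is well-ordered of cardinality < κ). -/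
open Cardinal

/-- The lexicographic (leading-coefficient) strict order on Hahn series; for the
κ-bounded Hahn group `(ℝ^Γ)_κ` this is the lexicographic order. -/
def hlt {Γ : Type*} [LinearOrder Γ] (f g : HahnSeries Γ ℝ) : Prop :=
  ∃ a, f.coeff a < g.coeff a ∧ ∀ b, b < a → f.coeff b = g.coeff b

/-- The lexicographic strict order on second-level series, i.e. on real-valued
functions on the Hahn group `ℝ^Γ` (ordered by `hlt`). -/
def hlt2 {Γ : Type*} [LinearOrder Γ] (F F' : HahnSeries Γ ℝ → ℝ) : Prop :=
  ∃ a, F a < F' a ∧ ∀ b, hlt b a → F b = F' b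

/-- `Neg(K) = ℝ((G^{<0}))_κ` for `K = ℝ((G))_κ`, `G = (ℝ^Γ)_κ`: real-valued functions
on `G` whose support consists of negative κ-bounded elements, is well-ordered with
respect to the (lexicographic) order of `G`, and has cardinality `< κ`. -/
def NegK (κ : Cardinal) (Γ : Type*) [LinearOrder Γ] : Set (HahnSeries Γ ℝ → ℝ) :=
  {F | (∀ g ∈ Function.support F, #g.support < κ ∧ hlt g 0) ∧
       (Function.support F).WellFoundedOn (hlt (Γ := Γ)) ∧
       #(Function.support F) < κ}

/-
`hlt` is the order of `Lex (HahnSeries Γ ℝ)`, so `NegK κ Γ` consists of the coefficient functions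
of the Hahn series over that chain whose support is small and contained in `G^{<0}`. On Hahn
series, `ι̂` is re-indexing along an order embedding; this is additive, strictly monotone and
preserves the size of supports, and a series is in its range as soon as its support lies in the
range of the embedding.
-/

universe u

theorem isPWO_preimage {Γ Δ : Type*} [Preorder Γ] [Preorder Δ] (f : Γ ↪o Δ) {s : Set Δ}
    (hs : s.IsPWO) : (f ⁻¹' s).IsPWO := fun u =>
  let ⟨m, n, hmn, hle⟩ := hs fun k => ⟨f (u k), (u k).2⟩
  ⟨m, n, hmn, f.le_iff_le.1 hle⟩

section EmbDomain

variable {Γ Δ R : Type*} [PartialOrder Γ] [PartialOrder Δ] [Zero R]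

theorem support_embDomain (f : Γ ↪o Δ) (x : HahnSeries Γ R) :
    (HahnSeries.embDomain f x).support = f '' x.support := by
  refine HahnSeries.support_embDomain_subset.antisymm ?_
  rintro _ ⟨γ, hγ, rfl⟩
  rwa [HahnSeries.mem_support, HahnSeries.embDomain_coeff]

theorem mem_range_embDomain_iff {f : Γ ↪o Δ} {y : HahnSeries Δ R} :
    y ∈ Set.range (HahnSeries.embDomain f) ↔ y.support ⊆ Set.range f := by
  constructor
  · rintro ⟨x, rfl⟩
    exact (support_embDomain f x).trans_subset (Set.image_subset_range f _)
  · intro hy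
    refine ⟨⟨y.coeff ∘ f, isPWO_preimage f y.isPWO_support⟩, ?_⟩
    ext δ
    by_cases hδ : δ ∈ Set.range f
    · obtain ⟨γ, rfl⟩ := hδ
      exact HahnSeries.embDomain_coeff
    · rw [HahnSeries.embDomain_of_notMem_range hδ]
      exact (Function.notMem_support.1 fun h => hδ (hy h)).symm

end EmbDomain

theorem cardSupp_embDomain {Γ Δ : Type u} {R : Type*} [PartialOrder Γ] [PartialOrder Δ] [Zero R]
    (f : Γ ↪o Δ) (x : HahnSeries Γ R) :
    (HahnSeries.embDomain f x).cardSupp = x.cardSupp := by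
  rw [HahnSeries.cardSupp, support_embDomain, mk_image_eq f.injective, HahnSeries.cardSupp]

section NegK

variable {Γ : Type*} [LinearOrder Γ]

theorem hlt_iff_toLex_lt {f g : HahnSeries Γ ℝ} : hlt f g ↔ toLex f < toLex g :=
  exists_congr fun _ => and_comm

theorem hlt2_coeff_iff_toLex_lt {X Y : HahnSeries (Lex (HahnSeries Γ ℝ)) ℝ} :
    hlt2 (X.coeff ∘ toLex) (Y.coeff ∘ toLex) ↔ toLex X < toLex Y := by
  simp only [hlt2, hlt_iff_toLex_lt, HahnSeries.lt_iff, Function.comp_apply, and_comm,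
    toLex.surjective.exists, toLex.surjective.forall, ofLex_toLex]

/-- The chain `G^{<0}` of negative elements of the `κ`-bounded Hahn group `G = (ℝ^Γ)_κ`, as a
subset of the lexicographically ordered group of all Hahn series. -/
def boundedNeg (κ : Cardinal) (Γ : Type*) [LinearOrder Γ] : Set (Lex (HahnSeries Γ ℝ)) :=
  {h | (ofLex h).cardSupp < κ ∧ h < 0}

theorem toLex_mem_boundedNeg_iff {κ : Cardinal} {g : HahnSeries Γ ℝ} :
    toLex g ∈ boundedNeg κ Γ ↔ #g.support < κ ∧ hlt g 0 :=
  and_congr_right fun _ => hlt_iff_toLex_lt.symm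

theorem mem_negK_iff_exists_coeff_eq {κ : Cardinal} {F : HahnSeries Γ ℝ → ℝ} :
    F ∈ NegK κ Γ ↔ ∃ X : HahnSeries (Lex (HahnSeries Γ ℝ)) ℝ,
      X.support ⊆ boundedNeg κ Γ ∧ X.cardSupp < κ ∧ X.coeff ∘ toLex = F := by
  constructor
  · rintro ⟨hneg, hwf, hcard⟩
    have hwf' : (Function.support (F ∘ ofLex)).IsWF :=
      hwf.mono' fun _ _ _ _ => hlt_iff_toLex_lt.2
    exact ⟨⟨F ∘ ofLex, hwf'.isPWO⟩, fun h hh => toLex_mem_boundedNeg_iff.2 (hneg (ofLex h) hh),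
      hcard, rfl⟩
  · rintro ⟨X, hneg, hcard, rfl⟩
    exact ⟨fun g hg => toLex_mem_boundedNeg_iff.1 (hneg hg),
      X.isWF_support.mono' fun _ _ _ _ => hlt_iff_toLex_lt.1, hcard⟩

end NegK

section ChainLift

/-- The lift `ι̂` of an order embedding `ι` of a chain `Δ` into the Hahn group over `Γ`: it sends
`Σ g_δ 1_δ` to `Σ g_δ t^{ι(δ)}`, encoded like the elements of `NegK` by its coefficient function
on unordered Hahn series. -/
noncomputable def chainLift {Γ Δ : Type*} [LinearOrder Γ] [LinearOrder Δ]
    (ι : Δ ↪o Lex (HahnSeries Γ ℝ)) (g : HahnSeries Δ ℝ) : HahnSeries Γ ℝ → ℝ :=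
  (HahnSeries.embDomain ι g).coeff ∘ toLex

section OrderedGroup

variable {Γ Δ : Type*} [LinearOrder Γ] [LinearOrder Δ] (ι : Δ ↪o Lex (HahnSeries Γ ℝ))

theorem chainLift_apply (g : HahnSeries Δ ℝ) (δ : Δ) :
    chainLift ι g (ofLex (ι δ)) = g.coeff δ :=
  HahnSeries.embDomain_coeff

theorem chainLift_of_notMem_range (g : HahnSeries Δ ℝ) {h : HahnSeries Γ ℝ}
    (hh : toLex h ∉ Set.range ι) : chainLift ι g h = 0 :=
  HahnSeries.embDomain_of_notMem_range hh

theorem chainLift_injective : Function.Injective (chainLift ι) := fun _ _ h =>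
  HahnSeries.embDomain_injective <| HahnSeries.coeff_injective <|
    toLex.surjective.injective_comp_right h

theorem chainLift_add (g g' : HahnSeries Δ ℝ) :
    chainLift ι (g + g') = chainLift ι g + chainLift ι g' := by
  simp only [chainLift, HahnSeries.embDomain_add, HahnSeries.coeff_add', Pi.add_comp]

theorem hlt2_chainLift_iff {g g' : HahnSeries Δ ℝ} :
    hlt2 (chainLift ι g) (chainLift ι g') ↔ hlt g g' := by
  rw [chainLift, chainLift, hlt2_coeff_iff_toLex_lt, hlt_iff_toLex_lt]
  exact (HahnSeries.embDomainOrderEmbedding ι).lt_iff_lt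

end OrderedGroup

variable {Γ Δ : Type u} [LinearOrder Γ] [LinearOrder Δ] {ι : Δ ↪o Lex (HahnSeries Γ ℝ)}
  {κ : Cardinal}

theorem chainLift_mem_negK (hι : Set.range ι ⊆ boundedNeg κ Γ) {g : HahnSeries Δ ℝ}
    (hg : g.cardSupp < κ) : chainLift ι g ∈ NegK κ Γ :=
  mem_negK_iff_exists_coeff_eq.2 ⟨HahnSeries.embDomain ι g,
    (mem_range_embDomain_iff.1 ⟨g, rfl⟩).trans hι, (cardSupp_embDomain ι g).trans_lt hg, rfl⟩

theorem exists_chainLift_eq_of_mem_negK (hι : boundedNeg κ Γ ⊆ Set.range ι)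
    {F : HahnSeries Γ ℝ → ℝ} (hF : F ∈ NegK κ Γ) :
    ∃ g : HahnSeries Δ ℝ, g.cardSupp < κ ∧ chainLift ι g = F := by
  obtain ⟨X, hneg, hcard, rfl⟩ := mem_negK_iff_exists_coeff_eq.1 hF
  obtain ⟨g, rfl⟩ := mem_range_embDomain_iff.2 (hneg.trans hι)
  exact ⟨g, (cardSupp_embDomain ι g).symm.trans_lt hcard, rfl⟩

end ChainLift

theorem lift_chain_iso_to_hahn_group_general
    (κ : Cardinal) {Γ Δ : Type u} [LinearOrder Γ] [LinearOrder Δ] (ι : Δ → HahnSeries Γ ℝ)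
    (hι₁ : ∀ δ, #(ι δ).support < κ ∧ hlt (ι δ) 0)
    (hι₂ : ∀ δ δ', δ < δ' → hlt (ι δ) (ι δ'))
    (hι₃ : ∀ g : HahnSeries Γ ℝ, #g.support < κ → hlt g 0 → ∃ δ, ι δ = g) :
    ∃ Φ : {g : HahnSeries Δ ℝ // #g.support < κ} → (HahnSeries Γ ℝ → ℝ),
      (∀ g δ, Φ g (ι δ) = g.1.coeff δ) ∧
      (∀ g h, h ∉ Set.range ι → Φ g h = 0) ∧
      (∀ g, Φ g ∈ NegK κ Γ) ∧
      Function.Injective Φ ∧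
      (∀ F ∈ NegK κ Γ, ∃ g, Φ g = F) ∧
      (∀ g g' g'', g.1 + g'.1 = g''.1 → ∀ h, Φ g'' h = Φ g h + Φ g' h) ∧
      (∀ g g', hlt g.1 g'.1 ↔ hlt2 (Φ g) (Φ g')) := by
  let e : Δ ↪o Lex (HahnSeries Γ ℝ) := OrderEmbedding.ofStrictMono (toLex ∘ ι) fun δ δ' h =>
    hlt_iff_toLex_lt.1 (hι₂ δ δ' h)
  have range_subset : Set.range e ⊆ boundedNeg κ Γ :=
    Set.range_subset_iff.2 fun δ => toLex_mem_boundedNeg_iff.2 (hι₁ δ)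
  have subset_range : boundedNeg κ Γ ⊆ Set.range e := fun h hh =>
    let ⟨hcard, hneg⟩ := toLex_mem_boundedNeg_iff.1 hh
    hι₃ (ofLex h) hcard hneg
  refine ⟨fun g => chainLift e g.1, fun g => chainLift_apply e g.1,
    fun g _ => chainLift_of_notMem_range e g.1, fun g => chainLift_mem_negK range_subset g.2,
    (chainLift_injective e).comp Subtype.val_injective, fun F hF => ?_,
    fun g g' g'' hsum h => ?_, fun _ _ => (hlt2_chainLift_iff e).symm⟩
  · obtain ⟨g, hg, rfl⟩ := exists_chainLift_eq_of_mem_negK subset_range hF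
    exact ⟨⟨g, hg⟩, rfl⟩
  · simp only [← hsum, chainLift_add, Pi.add_apply]

/-- **Lifting a chain isomorphism to the Hahn group (Main Lemma, first part).**
Let `κ` be regular uncountable, `Γ` a chain, `G = (ℝ^Γ)_κ` and `K = ℝ((G))_κ`.
Every order isomorphism `ι : Γ → G^{<0}` lifts to an isomorphism of ordered groups
`ι̂ : (G,+) → (Neg(K),+)`, `ι̂(Σ g_γ 1_γ) = Σ g_γ t^{ι(γ)}`; in particular the
right-hand side is a well-defined element of `K` (it lies in `Neg(K)`, i.e. its
support is well-ordered of cardinality `< κ`). -/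
theorem lift_chain_iso_to_hahn_group
    (κ : Cardinal) (hreg : κ.IsRegular) (hunc : ℵ₀ < κ)
    (Γ : Type*) [LinearOrder Γ] (ι : Γ → HahnSeries Γ ℝ)
    (hι₁ : ∀ γ, #(ι γ).support < κ ∧ hlt (ι γ) 0)
    (hι₂ : ∀ γ γ', γ < γ' ↔ hlt (ι γ) (ι γ'))
    (hι₃ : ∀ g : HahnSeries Γ ℝ, #g.support < κ → hlt g 0 → ∃ γ, ι γ = g) :
    ∃ Φ : {g : HahnSeries Γ ℝ // #g.support < κ} → (HahnSeries Γ ℝ → ℝ),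
      (∀ g γ, Φ g (ι γ) = g.1.coeff γ) ∧
      (∀ g h, h ∉ Set.range ι → Φ g h = 0) ∧
      (∀ g, Φ g ∈ NegK κ Γ) ∧
      Function.Injective Φ ∧
      (∀ F ∈ NegK κ Γ, ∃ g, Φ g = F) ∧
      (∀ g g' g'', g.1 + g'.1 = g''.1 → ∀ h, Φ g'' h = Φ g h + Φ g' h) ∧
      (∀ g g', hlt g.1 g'.1 ↔ hlt2 (Φ g) (Φ g')) :=
  lift_chain_iso_to_hahn_group_general κ ι hι₁ (fun γ γ' => (hι₂ γ γ').1) hι₃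
end

section
/- Let κ be a regular uncountable cardinal, Γ a chain, G = (ℝ^Γ)_κ, K = ℝ((G))_κ, and ι : Γ → G^{<0} an order isomorphism. Then setting log(t^g) := Σ_{γ∈Γ} (−g_γ) t^{ι(γ)} for g = Σ_{γ∈Γ} g_γ 1_γ ∈ G defines a left logarithm on K, i.e., an isomorphism of ordered groups from (Mon(K),·,<) onto (Neg(K),+,<); moreover this left logarithm satisfies v(log t^g) = ι(min support g) for every g ∈ G^{<0}. -/
open Cardinal

/-!
The exponents `ι γ` are ordered like the indices `γ`, so relabelling the coefficients of `g` along
`ι` carries well-ordered supports to well-ordered supports and preserves cardinality and the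
lexicographic order. The logarithm is this relabelling composed with negation. Negation reverses
the order, and so does `g ↦ t^g`, so the logarithm increases on monomials. Surjectivity onto
`Neg(K)` is exactly the surjectivity of `ι` onto `G^{<0}`.
-/

section Relabelling

variable {I E R : Type*} {r : I → I → Prop} {s : E → E → Prop}

theorem support_extend_zero [Zero R] {f : I → E} (hf : f.Injective) (a : I → R) :
    Function.support (Function.extend f a 0) = f '' Function.support a := by
  ext x
  by_cases hx : x ∈ Set.range f
  · obtain ⟨i, rfl⟩ := hx
    rw [Function.mem_support, hf.extend_apply, hf.mem_set_image, Function.mem_support]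
  · rw [Function.mem_support, Function.extend_apply' _ _ _ hx]
    exact iff_of_false (fun h => h rfl) fun h => hx (Set.image_subset_range _ _ h)

theorem wellFoundedOn_image_relEmbedding (e : r ↪r s) {t : Set I} :
    (e '' t).WellFoundedOn s ↔ t.WellFoundedOn r := by
  have relabelled : Function.onFun s e = r := funext₂ fun _ _ => propext e.map_rel_iff
  rw [Set.wellFoundedOn_image, relabelled]

theorem lex_extend_iff [Preorder R] (e : r ↪r s) {a b : I → R} {c : E → R} :
    Pi.Lex s (· < ·) (Function.extend e a c) (Function.extend e b c) ↔
      Pi.Lex r (· < ·) a b := by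
  have apply_range (d : I → R) (i : I) : Function.extend e d c (e i) = d i :=
    e.injective.extend_apply d c i
  have apply_off (d : I → R) {x : E} (hx : x ∉ Set.range e) : Function.extend e d c x = c x :=
    Function.extend_apply' d c x hx
  constructor
  · rintro ⟨x, agree_below, lt_at⟩
    by_cases hx : x ∈ Set.range e
    · obtain ⟨i, rfl⟩ := hx
      refine ⟨i, fun j hj => ?_, ?_⟩
      · simpa only [apply_range] using agree_below (e j) (e.map_rel_iff.2 hj)
      · simpa only [apply_range] using lt_at
    · rw [apply_off a hx, apply_off b hx] at lt_at
      exact absurd lt_at (lt_irrefl _)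
  · rintro ⟨i, agree_below, lt_at⟩
    refine ⟨e i, fun y hy => ?_, by simpa only [apply_range] using lt_at⟩
    by_cases hrange : y ∈ Set.range e
    · obtain ⟨j, rfl⟩ := hrange
      rw [apply_range, apply_range, agree_below j (e.map_rel_iff.1 hy)]
    · rw [apply_off a hrange, apply_off b hrange]

theorem lex_neg_iff [AddCommGroup R] [PartialOrder R] [IsOrderedAddMonoid R] {a b : I → R} :
    Pi.Lex r (· < ·) (-a) (-b) ↔ Pi.Lex r (· < ·) b a := by
  simp only [Pi.Lex, Pi.neg_apply, neg_inj, neg_lt_neg_iff, @eq_comm _ (b _)]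

end Relabelling

section LeftLog

variable {Γ E R : Type*} [PartialOrder Γ] [AddCommGroup R]

/-- The series `log (t^g) = Σ_γ (-g_γ) t^{ι γ}` attached to the monomial `t^g`, encoded by its
coefficient function on a type `E` of exponents. For a non-injective `ι` the coefficients in a fibre
are not summed: the value is that of an arbitrary preimage. -/
noncomputable def leftLog (ι : Γ → E) (g : HahnSeries Γ R) : E → R :=
  Function.extend ι (-g.coeff) 0

theorem leftLog_apply {ι : Γ → E} (hι : ι.Injective) (g : HahnSeries Γ R) (γ : Γ) :
    leftLog ι g (ι γ) = -g.coeff γ :=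
  hι.extend_apply _ _ γ

theorem leftLog_of_notMem_range {ι : Γ → E} {x : E} (hx : x ∉ Set.range ι)
    (g : HahnSeries Γ R) : leftLog ι g x = 0 :=
  Function.extend_apply' _ _ _ hx

theorem support_leftLog {ι : Γ → E} (hι : ι.Injective) (g : HahnSeries Γ R) :
    Function.support (leftLog ι g) = ι '' g.support := by
  rw [leftLog, support_extend_zero hι, Function.support_neg, HahnSeries.support]

theorem leftLog_injective {ι : Γ → E} (hι : ι.Injective) :
    Function.Injective (leftLog ι : HahnSeries Γ R → E → R) :=
  (Function.extend_injective hι (0 : E → R)).comp (neg_injective.comp HahnSeries.coeff_injective)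

theorem leftLog_add (ι : Γ → E) (g g' : HahnSeries Γ R) :
    leftLog ι (g + g') = leftLog ι g + leftLog ι g' := by
  simp only [leftLog, HahnSeries.coeff_add', neg_add, ← Function.extend_add, add_zero]

theorem lex_leftLog_iff [PartialOrder R] [IsOrderedAddMonoid R] {s : E → E → Prop}
    (e : ((· < ·) : Γ → Γ → Prop) ↪r s) {g g' : HahnSeries Γ R} :
    Pi.Lex s (· < ·) (leftLog e g) (leftLog e g') ↔
      Pi.Lex (· < ·) (· < ·) g'.coeff g.coeff := by
  rw [leftLog, leftLog, lex_extend_iff, lex_neg_iff]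

theorem leadingExponent_leftLog {s : E → E → Prop} (e : ((· < ·) : Γ → Γ → Prop) ↪r s)
    {g : HahnSeries Γ R} {γ₀ : Γ} (hγ₀ : IsLeast g.support γ₀) :
    leftLog e g (e γ₀) ≠ 0 ∧ ∀ x, leftLog e g x ≠ 0 → x = e γ₀ ∨ s (e γ₀) x := by
  simp only [← Function.mem_support, support_leftLog e.injective]
  refine ⟨Set.mem_image_of_mem e hγ₀.1, ?_⟩
  rintro _ ⟨γ, hγ, rfl⟩
  exact (hγ₀.2 hγ).eq_or_lt.imp (fun h => congrArg e h.symm) e.map_rel_iff.2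

end LeftLog

theorem exists_leftLog_eq {Γ E R : Type*} [LinearOrder Γ] [AddCommGroup R] {s : E → E → Prop}
    (e : ((· < ·) : Γ → Γ → Prop) ↪r s) {F : E → R}
    (hF : (Function.support F).WellFoundedOn s) (hrange : Function.support F ⊆ Set.range e) :
    ∃ g : HahnSeries Γ R, leftLog e g = F := by
  have image_support : e '' Function.support (-(F ∘ e)) = Function.support F := by
    rw [Function.support_neg, Function.support_comp_eq_preimage,
      Set.image_preimage_eq_of_subset hrange]
  have support_isPWO : (Function.support (-(F ∘ e))).IsPWO := by
    rwa [Set.isPWO_iff_isWF, Set.IsWF, ← wellFoundedOn_image_relEmbedding e, image_support]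
  refine ⟨⟨-(F ∘ e), support_isPWO⟩, funext fun x => ?_⟩
  by_cases hx : x ∈ Set.range e
  · obtain ⟨γ, rfl⟩ := hx
    exact (leftLog_apply e.injective _ γ).trans (neg_neg (F (e γ)))
  · rw [leftLog_of_notMem_range hx, Function.notMem_support.1 fun h => hx (hrange h)]

section NegativeSeries

variable {Γ : Type*} [LinearOrder Γ] {κ : Cardinal}

theorem hlt_iff_lex {f g : HahnSeries Γ ℝ} :
    hlt f g ↔ Pi.Lex (· < ·) (· < ·) f.coeff g.coeff :=
  exists_congr fun _ => and_comm

theorem hlt2_iff_lex {F F' : HahnSeries Γ ℝ → ℝ} : hlt2 F F' ↔ Pi.Lex hlt (· < ·) F F' :=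
  exists_congr fun _ => and_comm

theorem hlt_irrefl (f : HahnSeries Γ ℝ) : ¬ hlt f f :=
  fun ⟨_, lt_at, _⟩ => lt_irrefl _ lt_at

theorem injective_of_lt_iff_hlt {ι : Γ → HahnSeries Γ ℝ}
    (hι : ∀ γ γ', γ < γ' ↔ hlt (ι γ) (ι γ')) : ι.Injective :=
  Function.Injective.of_lt_imp_ne fun γ γ' h heq => hlt_irrefl (ι γ') (heq ▸ (hι γ γ').1 h)

theorem hlt2_leftLog_iff (e : ((· < ·) : Γ → Γ → Prop) ↪r hlt (Γ := Γ))
    {g g' : HahnSeries Γ ℝ} : hlt2 (leftLog e g) (leftLog e g') ↔ hlt g' g := by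
  rw [hlt2_iff_lex, lex_leftLog_iff, hlt_iff_lex]

theorem leftLog_mem_NegK (e : ((· < ·) : Γ → Γ → Prop) ↪r hlt (Γ := Γ))
    (he : ∀ γ, #(e γ).support < κ ∧ hlt (e γ) 0) {g : HahnSeries Γ ℝ} (hg : #g.support < κ) :
    leftLog e g ∈ NegK κ Γ := by
  rw [NegK, Set.mem_ofPred_eq, support_leftLog e.injective, wellFoundedOn_image_relEmbedding,
    mk_image_eq e.injective]
  exact ⟨Set.forall_mem_image.2 fun γ _ => he γ, g.isWF_support, hg⟩

theorem exists_leftLog_eq_of_mem_NegK (e : ((· < ·) : Γ → Γ → Prop) ↪r hlt (Γ := Γ))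
    (he : ∀ g : HahnSeries Γ ℝ, #g.support < κ → hlt g 0 → ∃ γ, e γ = g)
    {F : HahnSeries Γ ℝ → ℝ} (hF : F ∈ NegK κ Γ) :
    ∃ g : HahnSeries Γ ℝ, #g.support < κ ∧ leftLog e g = F := by
  obtain ⟨support_negative, support_wellFounded, card_support⟩ := hF
  obtain ⟨g, rfl⟩ := exists_leftLog_eq e support_wellFounded fun h hh =>
    he h (support_negative h hh).1 (support_negative h hh).2
  rw [support_leftLog e.injective, mk_image_eq e.injective] at card_support
  exact ⟨g, card_support, rfl⟩

end NegativeSeries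

theorem main_lemma_left_logarithm_general
    (κ : Cardinal) (Γ : Type*) [LinearOrder Γ] (ι : Γ → HahnSeries Γ ℝ)
    (hι₁ : ∀ γ, #(ι γ).support < κ ∧ hlt (ι γ) 0)
    (hι₂ : ∀ γ γ', γ < γ' ↔ hlt (ι γ) (ι γ'))
    (hι₃ : ∀ g : HahnSeries Γ ℝ, #g.support < κ → hlt g 0 → ∃ γ, ι γ = g) :
    ∃ L : {g : HahnSeries Γ ℝ // #g.support < κ} → (HahnSeries Γ ℝ → ℝ),
      (∀ g γ, L g (ι γ) = -(g.1.coeff γ)) ∧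
      (∀ g h, h ∉ Set.range ι → L g h = 0) ∧
      (∀ g, L g ∈ NegK κ Γ) ∧
      Function.Injective L ∧
      (∀ F ∈ NegK κ Γ, ∃ g, L g = F) ∧
      (∀ g g' g'', g.1 + g'.1 = g''.1 → ∀ h, L g'' h = L g h + L g' h) ∧
      (∀ g g', hlt g'.1 g.1 ↔ hlt2 (L g) (L g')) ∧
      (∀ g γ₀, IsLeast g.1.support γ₀ →
        L g (ι γ₀) ≠ 0 ∧ ∀ h, L g h ≠ 0 → h = ι γ₀ ∨ hlt (ι γ₀) h) := by
  have hι : ι.Injective := injective_of_lt_iff_hlt hι₂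
  let e : ((· < ·) : Γ → Γ → Prop) ↪r hlt (Γ := Γ) := ⟨⟨ι, hι⟩, (hι₂ _ _).symm⟩
  refine ⟨fun g => leftLog ι g.1, fun g => leftLog_apply hι g.1,
    fun g _ hh => leftLog_of_notMem_range hh g.1, fun g => leftLog_mem_NegK e hι₁ g.2,
    (leftLog_injective hι).comp Subtype.val_injective, fun F hF => ?_, fun g g' g'' hg h => ?_,
    fun _ _ => (hlt2_leftLog_iff e).symm, fun _ _ => leadingExponent_leftLog e⟩
  · obtain ⟨g, card_support, hg⟩ := exists_leftLog_eq_of_mem_NegK e hι₃ hF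
    exact ⟨⟨g, card_support⟩, hg⟩
  · simp only [← hg, leftLog_add, Pi.add_apply]

/-- **The Main Lemma: a uniform left logarithm.**  Let `κ` be regular uncountable,
`Γ` a chain, `G = (ℝ^Γ)_κ`, `K = ℝ((G))_κ`, and `ι : Γ → G^{<0}` an order isomorphism.
Then `log(t^g) := Σ_γ (−g_γ) t^{ι(γ)}` defines a left logarithm on `K`: an isomorphism
of ordered groups from `(Mon(K), ·, <)` (monomials `t^g`, indexed by their exponents
`g ∈ G`, with `t^g·t^h = t^{g+h}` and `t^g < t^h ↔ h < g`) onto `(Neg(K), +, <)`.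
Moreover `v(log t^g) = ι(min support g)` for every `g ∈ G^{<0}`. -/
theorem main_lemma_left_logarithm
    (κ : Cardinal) (hreg : κ.IsRegular) (hunc : ℵ₀ < κ)
    (Γ : Type*) [LinearOrder Γ] (ι : Γ → HahnSeries Γ ℝ)
    (hι₁ : ∀ γ, #(ι γ).support < κ ∧ hlt (ι γ) 0)
    (hι₂ : ∀ γ γ', γ < γ' ↔ hlt (ι γ) (ι γ'))
    (hι₃ : ∀ g : HahnSeries Γ ℝ, #g.support < κ → hlt g 0 → ∃ γ, ι γ = g) :
    ∃ L : {g : HahnSeries Γ ℝ // #g.support < κ} → (HahnSeries Γ ℝ → ℝ),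
      -- the defining formula log (t^g) = Σ_γ (−g_γ) t^{ι(γ)}
      (∀ g γ, L g (ι γ) = -(g.1.coeff γ)) ∧
      (∀ g h, h ∉ Set.range ι → L g h = 0) ∧
      -- well-defined, with values in Neg(K)
      (∀ g, L g ∈ NegK κ Γ) ∧
      -- bijective from Mon(K) onto Neg(K)
      Function.Injective L ∧
      (∀ F ∈ NegK κ Γ, ∃ g, L g = F) ∧
      -- multiplication of monomials goes to addition
      (∀ g g' g'', g.1 + g'.1 = g''.1 → ∀ h, L g'' h = L g h + L g' h) ∧
      -- order preserving (recall t^g < t^{g'} iff g' < g)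
      (∀ g g', hlt g'.1 g.1 ↔ hlt2 (L g) (L g')) ∧
      -- v(log t^g) = ι(min support g) for g ∈ G^{<0}
      (∀ g : {g : HahnSeries Γ ℝ // #g.support < κ}, hlt g.1 0 →
        ∀ γ₀, g.1.coeff γ₀ ≠ 0 → (∀ γ, g.1.coeff γ ≠ 0 → γ₀ ≤ γ) →
          (L g (ι γ₀) ≠ 0 ∧ ∀ h, L g h ≠ 0 → h = ι γ₀ ∨ hlt (ι γ₀) h)) := by
  obtain ⟨L, coeff_range, coeff_off, mem, inj, surj, map_add, order, leading⟩ :=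
    main_lemma_left_logarithm_general κ Γ ι hι₁ hι₂ hι₃
  exact ⟨L, coeff_range, coeff_off, mem, inj, surj, map_add, order,
    fun g _ γ₀ hγ₀ hmin => leading g γ₀ ⟨hγ₀, hmin⟩⟩
end

section
/- Let κ be a regular uncountable cardinal and Γ₀ a nonempty chain admitting an increasing automorphism (an order automorphism σ₀ with σ₀(γ) > γ for all γ ∈ Γ₀). Then there exist a chain Γ containing Γ₀ and an order isomorphism l : Γ → G^{<0}, where G = (ℝ^Γ)_κ, such that l(min support g) > g for every g ∈ G^{<0}. Consequently K = ℝ((G))_κ admits a (GA)-left logarithm. -/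
open Cardinal Classical

universe u

/-- `Γ` is a chain containing `Γ₀`, equipped with an order isomorphism
`l : Γ → G^{<0}` (`G = (ℝ^Γ)_κ`) satisfying `l(min support g) > g` for all
`g ∈ G^{<0}`; consequently `K = ℝ((G))_κ` admits a (GA)-left logarithm. -/
def IsGALexPower (κ : Cardinal) (Γ₀ Γ : Type*) [LinearOrder Γ₀] [LinearOrder Γ] : Prop :=
  (∃ e : Γ₀ → Γ, StrictMono e) ∧
  ∃ l : Γ → HahnSeries Γ ℝ,
    (∀ γ, #(l γ).support < κ ∧ hlt (l γ) 0) ∧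
    (∀ γ γ', γ < γ' ↔ hlt (l γ) (l γ')) ∧
    (∀ g : HahnSeries Γ ℝ, #g.support < κ → hlt g 0 → ∃ γ, l γ = g) ∧
    -- l(min support g) > g for every negative κ-bounded g
    (∀ g : HahnSeries Γ ℝ, #g.support < κ → hlt g 0 →
      ∀ γ₀, g.coeff γ₀ ≠ 0 → (∀ γ, g.coeff γ ≠ 0 → γ₀ ≤ γ) → hlt g (l γ₀)) ∧
    -- consequently: K admits a (GA)-left logarithm
    ∃ L : {g : HahnSeries Γ ℝ // #g.support < κ} → (HahnSeries Γ ℝ → ℝ),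
      (∀ g γ, L g (l γ) = -(g.1.coeff γ)) ∧
      (∀ g h, h ∉ Set.range l → L g h = 0) ∧
      (∀ g, L g ∈ NegK κ Γ) ∧
      Function.Injective L ∧
      (∀ F ∈ NegK κ Γ, ∃ g, L g = F) ∧
      (∀ g g' g'', g.1 + g'.1 = g''.1 → ∀ h, L g'' h = L g h + L g' h) ∧
      (∀ g g', hlt g'.1 g.1 ↔ hlt2 (L g) (L g')) ∧
      -- (GA): t^g > n·log(t^g) for all n ∈ ℕ and g ∈ G^{<0}
      (∀ (n : ℕ) (g : {g : HahnSeries Γ ℝ // #g.support < κ}), hlt g.1 0 →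
        hlt2 (fun h => n * L g h) (fun h => if h = g.1 then 1 else 0))

/-!
An order isomorphism `l : Γ → G^{<0}` turns every element of `Γ` into a name for a negative series
over `Γ`. We therefore fix a set of codes in which every `κ`-bounded series over codes has a code,
and look for `Γ` among the sets of codes that are chains under the lexicographic order of the coded
series. Zorn's lemma applies, starting from the chain in which `γ ∈ Γ₀` codes `-t^{σ γ}`. In a
maximal chain every negative series over the chain is coded, as a missing code could be adjoined;
so coding is onto `G^{<0}`.

Along the way each code stays below the support of the series it codes: this holds at the start
because `γ < σ γ`, and it persists because a series is smaller than those coded by the points of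
its support. It says that `l (min support g) > g`.
-/

section LexOrder

/-- The lexicographic comparison of functions along a relation `r` on the index type, which need
not be an order on all of it. -/
abbrev LexLT {ι α : Type*} [LT α] (r : ι → ι → Prop) (f g : ι → α) : Prop :=
  Pi.Lex r (· < ·) f g

theorem hlt_iff_lexLT {Γ : Type*} [LinearOrder Γ] {f g : HahnSeries Γ ℝ} :
    hlt f g ↔ LexLT (· < ·) f.coeff g.coeff :=
  exists_congr fun _ => and_comm

theorem hlt2_iff_lexLT {Γ : Type*} [LinearOrder Γ] {F F' : HahnSeries Γ ℝ → ℝ} :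
    hlt2 F F' ↔ LexLT hlt F F' :=
  exists_congr fun _ => and_comm

theorem hlt_asymm {Γ : Type*} [LinearOrder Γ] {f g : HahnSeries Γ ℝ} (hfg : hlt f g) :
    ¬ hlt g f := by
  rw [hlt_iff_lexLT] at hfg ⊢
  exact lt_asymm (a := toLex f.coeff) (b := toLex g.coeff) hfg

theorem not_lexLT_self {ι α : Type*} [Preorder α] (r : ι → ι → Prop) (f : ι → α) :
    ¬ LexLT r f f :=
  fun ⟨_, _, h⟩ => lt_irrefl _ h

section Zero

variable {ι ι' α : Type*} [Zero α]

theorem lexLT_comp_iff [Preorder α] {r : ι → ι → Prop} {s : ι' → ι' → Prop} {e : ι' → ι}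
    (he : ∀ i j, r (e i) (e j) ↔ s i j) {f g : ι → α}
    (hf : Function.support f ⊆ Set.range e) (hg : Function.support g ⊆ Set.range e) :
    LexLT s (f ∘ e) (g ∘ e) ↔ LexLT r f g := by
  have zero_or_range (a : ι) : (f a = 0 ∧ g a = 0) ∨ a ∈ Set.range e := by
    by_cases ha : a ∈ Set.range e
    · exact .inr ha
    · exact .inl ⟨Function.notMem_support.1 fun h => ha (hf h),
        Function.notMem_support.1 fun h => ha (hg h)⟩
  constructor
  · rintro ⟨i, heq, hlt⟩
    refine ⟨e i, fun b hb => ?_, hlt⟩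
    rcases zero_or_range b with ⟨hfb, hgb⟩ | ⟨j, rfl⟩
    · rw [hfb, hgb]
    · exact heq j ((he j i).1 hb)
  · rintro ⟨a, heq, hlt⟩
    rcases zero_or_range a with ⟨hfa, hga⟩ | ⟨i, rfl⟩
    · rw [hfa, hga] at hlt
      exact absurd hlt (lt_irrefl 0)
    · exact ⟨i, fun j hj => heq (e j) ((he j i).2 hj), hlt⟩

theorem lexLT_congr [Preorder α] {r s : ι → ι → Prop} {S : Set ι}
    (hrs : ∀ x ∈ S, ∀ y ∈ S, (r x y ↔ s x y)) {f g : ι → α}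
    (hf : Function.support f ⊆ S) (hg : Function.support g ⊆ S) :
    LexLT r f g ↔ LexLT s f g := by
  rw [← Subtype.range_coe (s := S)] at hf hg
  rw [← lexLT_comp_iff (e := Subtype.val) (fun x y => hrs x x.2 y y.2) hf hg,
    lexLT_comp_iff (fun _ _ => Iff.rfl) hf hg]

theorem lexLT_trichotomy [LinearOrder ι] [LinearOrder α] {f g : ι → α}
    (hf : (Function.support f).IsWF) (hg : (Function.support g).IsWF) :
    LexLT (· < ·) f g ∨ f = g ∨ LexLT (· < ·) g f :=
  (lt_trichotomy (toLex (⟨f, hf.isPWO⟩ : HahnSeries ι α)) (toLex ⟨g, hg.isPWO⟩)).imp_right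
    (.imp_left fun h => congrArg HahnSeries.coeff (toLex.injective h))

theorem strictMono_toLex_piSingle_of_neg [LinearOrder ι] [PartialOrder α] {c : α} (hc : c < 0) :
    StrictMono fun i : ι => toLex (Pi.single i c : ι → α) := fun i j hij => by
  refine ⟨i, fun k hk => ?_, ?_⟩
  · simp [hk.ne, (hk.trans hij).ne]
  · simpa [hij.ne] using hc

end Zero

end LexOrder

section NegativeSeries

universe v

variable {ι ι' : Type v} {κ : Cardinal.{v}}

/-- Negative `κ`-bounded series as functions: `f` represents an element of `G^{<0}`, where `r` is
the order of the exponents. -/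
structure IsBoundedNeg (κ : Cardinal.{v}) (r : ι → ι → Prop) (f : ι → ℝ) : Prop where
  card_lt : #(Function.support f) < κ
  wellFoundedOn : (Function.support f).WellFoundedOn r
  neg : LexLT r f 0

theorem isBoundedNeg_coeff_iff [LinearOrder ι] {g : HahnSeries ι ℝ} :
    IsBoundedNeg κ (· < ·) g.coeff ↔ #g.support < κ ∧ hlt g 0 :=
  ⟨fun h => ⟨h.card_lt, hlt_iff_lexLT.2 h.neg⟩,
    fun h => ⟨h.1, g.isWF_support, hlt_iff_lexLT.1 h.2⟩⟩

theorem isBoundedNeg_comp_iff {r : ι → ι → Prop} {s : ι' → ι' → Prop} {e : ι' → ι}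
    (he : ∀ i j, r (e i) (e j) ↔ s i j) (hinj : Function.Injective e) {f : ι → ℝ}
    (hf : Function.support f ⊆ Set.range e) :
    IsBoundedNeg κ s (f ∘ e) ↔ IsBoundedNeg κ r f := by
  have hsupp : Function.support f = e '' Function.support (f ∘ e) := by
    rw [Function.support_comp_eq_preimage, Set.image_preimage_eq_of_subset hf]
  have hcard : #(Function.support (f ∘ e)) < κ ↔ #(Function.support f) < κ := by
    rw [hsupp, mk_image_eq hinj]
  have hwf : (Function.support (f ∘ e)).WellFoundedOn s ↔
      (Function.support f).WellFoundedOn r := by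
    rw [hsupp, Set.wellFoundedOn_image]
    exact iff_of_eq (congrArg _ (funext₂ fun i j => propext (he i j).symm))
  have hneg : LexLT s (f ∘ e) 0 ↔ LexLT r f 0 := lexLT_comp_iff he hf (g := 0) (by simp)
  exact ⟨fun h => ⟨hcard.1 h.1, hwf.1 h.2, hneg.1 h.3⟩,
    fun h => ⟨hcard.2 h.1, hwf.2 h.2, hneg.2 h.3⟩⟩

theorem isBoundedNeg_congr {r s : ι → ι → Prop} {S : Set ι}
    (hrs : ∀ x ∈ S, ∀ y ∈ S, (r x y ↔ s x y)) {f : ι → ℝ} (hf : Function.support f ⊆ S) :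
    IsBoundedNeg κ r f ↔ IsBoundedNeg κ s f := by
  rw [← Subtype.range_coe (s := S)] at hf
  rw [← isBoundedNeg_comp_iff (e := Subtype.val) (fun x y => hrs x x.2 y y.2)
    Subtype.val_injective hf, isBoundedNeg_comp_iff (fun _ _ => Iff.rfl) Subtype.val_injective hf]

theorem isBoundedNeg_piSingle [LinearOrder ι] (hκ : 1 < κ) (i : ι) {c : ℝ} (hc : c < 0) :
    IsBoundedNeg κ (· < ·) (Pi.single i c) where
  card_lt := by rwa [Pi.support_single_of_ne hc.ne, mk_singleton]
  wellFoundedOn := by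
    rw [Pi.support_single_of_ne hc.ne]
    exact (Set.finite_singleton i).wellFoundedOn
  neg := ⟨i, fun j hj => Pi.single_eq_of_ne (M := fun _ => ℝ) hj.ne c, by simpa using hc⟩

end NegativeSeries

/-- A chain of codes: a set of elements of `U`, linearly ordered by `rel`, each of which codes a
negative `κ`-bounded series over the set with support above itself, and whose order is the
lexicographic order of the coded series. The map `code` is defined on all of `U`, so that chains
can be compared and extended without changing it; `rel` never holds outside `carrier`. -/
structure LexChain {U : Type u} (κ : Cardinal.{u}) (code : U → U → ℝ) where
  carrier : Set U
  rel : U → U → Prop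
  rel_iff : ∀ {x y}, rel x y ↔ x ∈ carrier ∧ y ∈ carrier ∧ LexLT rel (code x) (code y)
  trans : ∀ {x y z}, rel x y → rel y z → rel x z
  isChain : IsChain rel carrier
  isBoundedNeg : ∀ {x}, x ∈ carrier → IsBoundedNeg κ rel (code x)
  rel_of_code_ne_zero : ∀ {x a}, x ∈ carrier → code x a ≠ 0 → rel x a

namespace LexChain

variable {U : Type u} {κ : Cardinal.{u}} {code : U → U → ℝ}

section Basic

variable (p : LexChain κ code)

theorem irrefl (x : U) : ¬ p.rel x x :=
  fun h => not_lexLT_self _ _ (p.rel_iff.1 h).2.2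

theorem asymm {x y : U} (h : p.rel x y) : ¬ p.rel y x :=
  fun h' => p.irrefl x (p.trans h h')

theorem trichotomy {x y : U} (hx : x ∈ p.carrier) (hy : y ∈ p.carrier) :
    p.rel x y ∨ x = y ∨ p.rel y x := by
  by_cases h : x = y
  · exact .inr (.inl h)
  · exact (p.isChain hx hy h).imp_right .inr

theorem support_code_subset {x : U} (hx : x ∈ p.carrier) :
    Function.support (code x) ⊆ p.carrier :=
  fun _ ha => (p.rel_iff.1 (p.rel_of_code_ne_zero hx ha)).2.1

theorem eq_of_code_eq {x y : U} (hx : x ∈ p.carrier) (hy : y ∈ p.carrier)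
    (h : code x = code y) : x = y := by
  rcases p.trichotomy hx hy with hxy | hxy | hyx
  · exact absurd (h ▸ (p.rel_iff.1 hxy).2.2) (not_lexLT_self _ _)
  · exact hxy
  · exact absurd (h ▸ (p.rel_iff.1 hyx).2.2) (not_lexLT_self _ _)

noncomputable instance : LinearOrder p.carrier :=
  haveI : IsStrictTotalOrder p.carrier (fun x y => p.rel x y) :=
    { irrefl := fun x => p.irrefl x
      trans := fun _ _ _ => p.trans
      trichotomous := fun x y hxy hyx =>
        Subtype.ext (((p.trichotomy x.2 y.2).resolve_left hxy).resolve_right hyx) }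
  linearOrderOfSTO fun x y : p.carrier => p.rel x y

theorem lt_iff_rel {x y : p.carrier} : x < y ↔ p.rel x y :=
  Iff.rfl

theorem lexLT_coe_iff {f g : U → ℝ} (hf : Function.support f ⊆ p.carrier)
    (hg : Function.support g ⊆ p.carrier) :
    LexLT (· < ·) (fun x : p.carrier => f x) (fun x : p.carrier => g x) ↔ LexLT p.rel f g :=
  lexLT_comp_iff (fun _ _ => p.lt_iff_rel.symm) (by rwa [Subtype.range_coe])
    (by rwa [Subtype.range_coe])

theorem isBoundedNeg_coe_iff {f : U → ℝ} (hf : Function.support f ⊆ p.carrier) :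
    IsBoundedNeg κ (· < ·) (fun x : p.carrier => f x) ↔ IsBoundedNeg κ p.rel f :=
  isBoundedNeg_comp_iff (fun _ _ => p.lt_iff_rel.symm) Subtype.val_injective
    (by rwa [Subtype.range_coe])

theorem lexLT_trans {f g h : U → ℝ} (hf : Function.support f ⊆ p.carrier)
    (hg : Function.support g ⊆ p.carrier) (hh : Function.support h ⊆ p.carrier)
    (hfg : LexLT p.rel f g) (hgh : LexLT p.rel g h) : LexLT p.rel f h := by
  rw [← p.lexLT_coe_iff hf hg] at hfg
  rw [← p.lexLT_coe_iff hg hh] at hgh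
  rw [← p.lexLT_coe_iff hf hh]
  exact Pi.Lex.isStrictOrder.trans _ _ _ hfg hgh

theorem lexLT_trichotomy {f g : U → ℝ} (hf : Function.support f ⊆ p.carrier)
    (hg : Function.support g ⊆ p.carrier) (hf' : IsBoundedNeg κ p.rel f)
    (hg' : IsBoundedNeg κ p.rel g) :
    LexLT p.rel f g ∨ f = g ∨ LexLT p.rel g f := by
  rw [← p.isBoundedNeg_coe_iff hf] at hf'
  rw [← p.isBoundedNeg_coe_iff hg] at hg'
  rw [← p.lexLT_coe_iff hf hg, ← p.lexLT_coe_iff hg hf]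
  refine (_root_.lexLT_trichotomy hf'.wellFoundedOn hg'.wellFoundedOn).imp_right
    (.imp_left fun h => funext fun x => ?_)
  by_cases hx : x ∈ p.carrier
  · exact congrFun h ⟨x, hx⟩
  · rw [Function.notMem_support.1 fun h => hx (hf h), Function.notMem_support.1 fun h => hx (hg h)]

end Basic

section Extension

instance : Preorder (LexChain κ code) :=
  Preorder.lift fun p => (p.carrier, p.rel)

theorem rel_iff_rel_of_le {p q : LexChain κ code} (h : p ≤ q) {x y : U} (hx : x ∈ p.carrier)
    (hy : y ∈ p.carrier) : p.rel x y ↔ q.rel x y := by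
  refine ⟨h.2 x y, fun hxy => ?_⟩
  rcases p.trichotomy hx hy with h' | rfl | h'
  · exact h'
  · exact absurd hxy (q.irrefl x)
  · exact absurd hxy (q.asymm (h.2 y x h'))

section Union

variable {c : Set (LexChain κ code)}

theorem exists_mem_carrier_and_mem_carrier (hc : IsChain (· ≤ ·) c) {x y : U}
    (hx : x ∈ ⋃ p ∈ c, p.carrier) (hy : y ∈ ⋃ p ∈ c, p.carrier) :
    ∃ p ∈ c, x ∈ p.carrier ∧ y ∈ p.carrier := by
  obtain ⟨p, hp, hxp⟩ := Set.mem_iUnion₂.1 hx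
  obtain ⟨q, hq, hyq⟩ := Set.mem_iUnion₂.1 hy
  obtain ⟨r, hr, hpr, hqr⟩ := hc.directedOn p hp q hq
  exact ⟨r, hr, hpr.1 hxp, hqr.1 hyq⟩

theorem rel_iff_exists_rel (hc : IsChain (· ≤ ·) c) {p : LexChain κ code} (hp : p ∈ c) :
    ∀ x ∈ p.carrier, ∀ y ∈ p.carrier, (p.rel x y ↔ ∃ q ∈ c, q.rel x y) := by
  refine fun x hx y hy => ⟨fun h => ⟨p, hp, h⟩, fun ⟨q, hq, h⟩ => ?_⟩
  obtain ⟨r, -, hpr, hqr⟩ := hc.directedOn p hp q hq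
  exact (rel_iff_rel_of_le hpr hx hy).2 (hqr.2 x y h)

/-- The union of a family of chains that is totally ordered by extension. -/
def union (c : Set (LexChain κ code)) (hc : IsChain (· ≤ ·) c) : LexChain κ code where
  carrier := ⋃ p ∈ c, p.carrier
  rel x y := ∃ p ∈ c, p.rel x y
  rel_iff {x y} := by
    have lexLT_iff {p} (hp : p ∈ c) (hx : x ∈ p.carrier) (hy : y ∈ p.carrier) :
        LexLT p.rel (code x) (code y) ↔ LexLT (fun x y => ∃ q ∈ c, q.rel x y) (code x) (code y) :=
      lexLT_congr (rel_iff_exists_rel hc hp) (p.support_code_subset hx) (p.support_code_subset hy)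
    constructor
    · rintro ⟨p, hp, hxy⟩
      obtain ⟨hx, hy, h⟩ := p.rel_iff.1 hxy
      exact ⟨Set.mem_biUnion hp hx, Set.mem_biUnion hp hy, (lexLT_iff hp hx hy).1 h⟩
    · rintro ⟨hx, hy, h⟩
      obtain ⟨p, hp, hx, hy⟩ := exists_mem_carrier_and_mem_carrier hc hx hy
      exact ⟨p, hp, p.rel_iff.2 ⟨hx, hy, (lexLT_iff hp hx hy).2 h⟩⟩
  trans := by
    rintro x y z ⟨p, hp, hxy⟩ ⟨q, hq, hyz⟩
    obtain ⟨r, hr, hpr, hqr⟩ := hc.directedOn p hp q hq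
    exact ⟨r, hr, r.trans (hpr.2 x y hxy) (hqr.2 y z hyz)⟩
  isChain x hx y hy hne := by
    obtain ⟨p, hp, hx, hy⟩ := exists_mem_carrier_and_mem_carrier hc hx hy
    exact (p.isChain hx hy hne).imp (fun h => ⟨p, hp, h⟩) fun h => ⟨p, hp, h⟩
  isBoundedNeg hx := by
    obtain ⟨p, hp, hx⟩ := Set.mem_iUnion₂.1 hx
    exact (isBoundedNeg_congr (rel_iff_exists_rel hc hp) (p.support_code_subset hx)).1
      (p.isBoundedNeg hx)
  rel_of_code_ne_zero hx ha := by
    obtain ⟨p, hp, hx⟩ := Set.mem_iUnion₂.1 hx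
    exact ⟨p, hp, p.rel_of_code_ne_zero hx ha⟩

theorem le_union (hc : IsChain (· ≤ ·) c) {p : LexChain κ code} (hp : p ∈ c) :
    p ≤ union c hc :=
  ⟨Set.subset_biUnion_of_mem (u := carrier) hp, fun _ _ h => ⟨p, hp, h⟩⟩

end Union

theorem exists_le_isMax (p : LexChain κ code) : ∃ q, p ≤ q ∧ IsMax q :=
  zorn_le_nonempty_Ici₀ p (fun c _ hc _ _ => ⟨union c hc, fun _ hq => le_union hc hq⟩) p le_rfl

section Insert

variable (p : LexChain κ code) {x₀ : U}

/-- At the leading exponent `m` of `f` the series coded by `a` vanishes, since its exponents all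
exceed `a ≥ m`. -/
theorem lexLT_code_of_ne_zero {f : U → ℝ} (hf : Function.support f ⊆ p.carrier)
    (hneg : LexLT p.rel f 0) {a : U} (ha : f a ≠ 0) : LexLT p.rel f (code a) := by
  obtain ⟨m, hlow, hm⟩ := hneg
  have code_eq_zero {b : U} (hb : ¬ p.rel a b) : code a b = 0 :=
    not_not.1 fun h => hb (p.rel_of_code_ne_zero (hf ha) h)
  have not_rel : ¬ p.rel a m := fun h => ha (hlow a h)
  refine ⟨m, fun b hb => ?_, by rwa [code_eq_zero not_rel]⟩
  rw [hlow b hb, code_eq_zero fun h => not_rel (p.trans h hb), Pi.zero_apply]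

/-- Adjoining a code `x₀` of a negative series that has no code in the chain yet. -/
def insert (hsupp : Function.support (code x₀) ⊆ p.carrier)
    (hneg : IsBoundedNeg κ p.rel (code x₀)) (hnew : code x₀ ∉ code '' p.carrier) :
    LexChain κ code :=
  let S : Set U := Insert.insert x₀ p.carrier
  let R (x y : U) : Prop := x ∈ S ∧ y ∈ S ∧ LexLT p.rel (code x) (code y)
  have supp_subset : ∀ x ∈ S, Function.support (code x) ⊆ p.carrier :=
    Set.forall_mem_insert.2 ⟨hsupp, fun _ => p.support_code_subset⟩
  have isBoundedNeg : ∀ x ∈ S, IsBoundedNeg κ p.rel (code x) :=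
    Set.forall_mem_insert.2 ⟨hneg, fun _ => p.isBoundedNeg⟩
  have rel_iff_R : ∀ x ∈ p.carrier, ∀ y ∈ p.carrier, (p.rel x y ↔ R x y) := fun x hx y hy => by
    simp only [p.rel_iff, R, S, Set.mem_insert_iff, hx, hy, or_true, true_and]
  have injOn : S.InjOn code := (Set.injOn_insert fun h => hnew ⟨x₀, h, rfl⟩).2
    ⟨fun _ hx _ hy => p.eq_of_code_eq hx hy, hnew⟩
  { carrier := S
    rel := R
    rel_iff := and_congr_right fun hx => and_congr_right fun hy =>
      lexLT_congr rel_iff_R (supp_subset _ hx) (supp_subset _ hy)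
    trans := fun ⟨hx, hy, hxy⟩ ⟨_, hz, hyz⟩ => ⟨hx, hz,
      p.lexLT_trans (supp_subset _ hx) (supp_subset _ hy) (supp_subset _ hz) hxy hyz⟩
    isChain := fun x hx y hy hne => by
      rcases p.lexLT_trichotomy (supp_subset x hx) (supp_subset y hy) (isBoundedNeg x hx)
        (isBoundedNeg y hy) with h | h | h
      · exact .inl ⟨hx, hy, h⟩
      · exact absurd (injOn hx hy h) hne
      · exact .inr ⟨hy, hx, h⟩
    isBoundedNeg := fun hx =>
      (isBoundedNeg_congr rel_iff_R (supp_subset _ hx)).1 (isBoundedNeg _ hx)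
    rel_of_code_ne_zero := fun {x a} hx ha => ⟨hx, Or.inr (supp_subset x hx ha),
      p.lexLT_code_of_ne_zero (supp_subset x hx) (isBoundedNeg x hx).neg ha⟩ }

theorem le_insert (hsupp : Function.support (code x₀) ⊆ p.carrier)
    (hneg : IsBoundedNeg κ p.rel (code x₀)) (hnew : code x₀ ∉ code '' p.carrier) :
    p ≤ p.insert hsupp hneg hnew :=
  ⟨Set.subset_insert _ _, fun _ _ h =>
    have ⟨hx, hy, hxy⟩ := p.rel_iff.1 h
    ⟨.inr hx, .inr hy, hxy⟩⟩

theorem code_mem_image_of_isMax (hp : IsMax p) (hsupp : Function.support (code x₀) ⊆ p.carrier)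
    (hneg : IsBoundedNeg κ p.rel (code x₀)) : code x₀ ∈ code '' p.carrier := by
  by_contra hnew
  exact hnew ⟨x₀, (hp (p.le_insert hsupp hneg hnew)).1 (Set.mem_insert x₀ _), rfl⟩

end Insert

end Extension

end LexChain

/-- `l` is an order isomorphism from `Γ` onto `G^{<0}`, `G = (ℝ^Γ)_κ`, such that `l δ > g` for all
`g ∈ G^{<0}` and `δ ∈ support g`; the last condition is expressed through `γ = l⁻¹ g`. -/
structure IsGAIso {Γ : Type*} [LinearOrder Γ] (κ : Cardinal) (l : Γ → HahnSeries Γ ℝ) : Prop where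
  hlt_iff : ∀ {γ δ}, hlt (l γ) (l δ) ↔ γ < δ
  mem_range_iff : ∀ {g}, g ∈ Set.range l ↔ #g.support < κ ∧ hlt g 0
  lt_of_coeff_ne_zero : ∀ {γ δ}, (l γ).coeff δ ≠ 0 → γ < δ

namespace LexChain

variable {U : Type u} {κ : Cardinal.{u}} {code : U → U → ℝ} (p : LexChain κ code)

theorem isBoundedNeg_code_coe (x : p.carrier) :
    IsBoundedNeg κ (· < ·) fun a : p.carrier => code x a :=
  (p.isBoundedNeg_coe_iff (p.support_code_subset x.2)).2 (p.isBoundedNeg x.2)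

/-- The series over the chain that is coded by an element of the chain. -/
def series (x : p.carrier) : HahnSeries p.carrier ℝ where
  coeff a := code x a
  isPWO_support' := Set.IsWF.isPWO (p.isBoundedNeg_code_coe x).wellFoundedOn

theorem mem_range_series_of_isMax (hp : IsMax p)
    (hcode : ∀ f : U → ℝ, f ≠ 0 → #(Function.support f) < κ → f ∈ Set.range code)
    {g : HahnSeries p.carrier ℝ} (hg : IsBoundedNeg κ (· < ·) g.coeff) :
    g ∈ Set.range p.series := by
  let f : U → ℝ := Function.extend Subtype.val g.coeff 0
  have hfg (a : p.carrier) : f a = g.coeff a := Subtype.val_injective.extend_apply _ _ a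
  have hsupp : Function.support f ⊆ p.carrier :=
    Function.support_extend_zero_subset.trans (Subtype.coe_image_subset _ _)
  have hf : IsBoundedNeg κ p.rel f :=
    (p.isBoundedNeg_coe_iff hsupp).1 (by simpa only [hfg] using hg)
  have hf0 : f ≠ 0 := fun h => not_lexLT_self p.rel 0 (h ▸ hf.neg)
  obtain ⟨x₀, hx₀⟩ := hcode f hf0 hf.card_lt
  obtain ⟨x, hx, hxf⟩ := p.code_mem_image_of_isMax hp (hx₀ ▸ hsupp) (hx₀ ▸ hf)
  refine ⟨⟨x, hx⟩, HahnSeries.ext (funext fun a => ?_)⟩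
  exact (congrFun (hxf.trans hx₀) a).trans (hfg a)

theorem isGAIso_series_of_isMax (hp : IsMax p)
    (hcode : ∀ f : U → ℝ, f ≠ 0 → #(Function.support f) < κ → f ∈ Set.range code) :
    IsGAIso κ p.series where
  hlt_iff {x y} := by
    rw [hlt_iff_lexLT, p.lt_iff_rel, p.rel_iff]
    exact (p.lexLT_coe_iff (p.support_code_subset x.2) (p.support_code_subset y.2)).trans
      ⟨fun h => ⟨x.2, y.2, h⟩, fun h => h.2.2⟩
  mem_range_iff {g} := by
    rw [← isBoundedNeg_coeff_iff]
    refine ⟨?_, p.mem_range_series_of_isMax hp hcode⟩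
    rintro ⟨x, rfl⟩
    exact p.isBoundedNeg_code_coe x
  lt_of_coeff_ne_zero {x _} h := p.rel_of_code_ne_zero x.2 h

end LexChain

/-- Codes for series. A code is either an element of `Γ₀` or a formal series
`∑ k, coeff k • t^(exponent k)` whose exponents are codes. -/
inductive SeriesCode (Γ₀ K : Type u) : Type u
  | base (γ : Γ₀)
  | series (exponent : K → SeriesCode Γ₀ K) (coeff : K → ℝ)

namespace SeriesCode

variable {Γ₀ K : Type u}

/-- The function coded by a code; `γ ∈ Γ₀` codes `-t^{σ γ}`. If the exponents of a formal series
are not distinct, one of the coefficients of each exponent is chosen. -/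
noncomputable def eval (σ : Γ₀ → Γ₀) : SeriesCode Γ₀ K → SeriesCode Γ₀ K → ℝ
  | base γ => Pi.single (base (σ γ)) (-1)
  | series e c => Function.extend e c 0

theorem base_injective : Function.Injective (base : Γ₀ → SeriesCode Γ₀ K) :=
  fun _ _ => base.inj

theorem mem_range_eval (σ : Γ₀ → Γ₀) {f : SeriesCode Γ₀ K → ℝ} (hf : f ≠ 0)
    (hcard : #(Function.support f) ≤ #K) : f ∈ Set.range (eval σ) := by
  have : Nonempty (Function.support f) := (Function.support_nonempty_iff.2 hf).to_subtype
  obtain ⟨i⟩ := hcard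
  let e : K → SeriesCode Γ₀ K := Subtype.val ∘ Function.invFun i
  have hrange : Set.range e = Function.support f := by
    rw [Set.range_comp, (Function.invFun_surjective i.injective).range_eq, Set.image_univ,
      Subtype.range_coe]
  refine ⟨series e (f ∘ e), funext fun x => ?_⟩
  by_cases hx : x ∈ Set.range e
  · obtain ⟨k, rfl⟩ := hx
    exact Function.FactorsThrough.extend_apply (fun _ _ h => congrArg f h) 0 k
  · have hfx : f x = 0 := Function.notMem_support.1 (hrange ▸ hx)
    rw [eval, Function.extend_apply' _ _ _ hx, hfx, Pi.zero_apply]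

section BaseChain

variable {σ : Γ₀ → Γ₀}

theorem eval_base_comp_base [DecidableEq Γ₀] (γ : Γ₀) :
    eval (K := K) σ (base γ) ∘ base = Pi.single (σ γ) (-1) := by
  ext δ
  simp [eval, Pi.single_apply]

theorem support_eval_base (γ : Γ₀) :
    Function.support (eval (K := K) σ (base γ)) = {base (σ γ)} :=
  Pi.support_single_of_ne (by norm_num)

theorem support_eval_base_subset_range (γ : Γ₀) :
    Function.support (eval (K := K) σ (base γ)) ⊆ Set.range base := by
  rw [support_eval_base]
  exact Set.singleton_subset_iff.2 ⟨σ γ, rfl⟩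

variable [LinearOrder Γ₀]

/-- The order of `Γ₀`, as a relation on codes. -/
def baseRel : SeriesCode Γ₀ K → SeriesCode Γ₀ K → Prop :=
  Relation.Map (· < ·) base base

theorem baseRel_base_iff {γ δ : Γ₀} : baseRel (base γ : SeriesCode Γ₀ K) (base δ) ↔ γ < δ :=
  Relation.map_apply_apply base_injective base_injective _ γ δ

theorem lexLT_eval_base_iff (hmono : StrictMono σ) {γ δ : Γ₀} :
    LexLT baseRel (eval (K := K) σ (base γ)) (eval σ (base δ)) ↔ γ < δ := by
  rw [← lexLT_comp_iff (fun _ _ => baseRel_base_iff) (support_eval_base_subset_range γ)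
    (support_eval_base_subset_range δ), eval_base_comp_base, eval_base_comp_base]
  exact (strictMono_toLex_piSingle_of_neg (neg_one_lt_zero (R := ℝ))).lt_iff_lt.trans
    hmono.lt_iff_lt

/-- The chain of the codes `γ ∈ Γ₀` of the series `-t^{σ γ}`. -/
def baseChain {κ : Cardinal.{u}} (hκ : 1 < κ) (hmono : StrictMono σ) (hlt : ∀ γ, γ < σ γ) :
    LexChain κ (eval (K := K) σ) where
  carrier := Set.range base
  rel := baseRel
  rel_iff {x y} := by
    constructor
    · rintro ⟨γ, δ, h, rfl, rfl⟩
      exact ⟨⟨γ, rfl⟩, ⟨δ, rfl⟩, (lexLT_eval_base_iff hmono).2 h⟩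
    · rintro ⟨⟨γ, rfl⟩, ⟨δ, rfl⟩, h⟩
      exact baseRel_base_iff.2 ((lexLT_eval_base_iff hmono).1 h)
  trans := by
    rintro _ _ _ ⟨γ, δ, h, rfl, rfl⟩ ⟨_, ε, h', hδ, rfl⟩
    obtain rfl := base_injective hδ
    exact baseRel_base_iff.2 (h.trans h')
  isChain := by
    rintro _ ⟨γ, rfl⟩ _ ⟨δ, rfl⟩ hne
    rw [baseRel_base_iff, baseRel_base_iff]
    exact lt_or_gt_of_ne fun h => hne (congrArg base h)
  isBoundedNeg := by
    rintro _ ⟨γ, rfl⟩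
    rw [← isBoundedNeg_comp_iff (fun _ _ => baseRel_base_iff) base_injective
      (support_eval_base_subset_range γ), eval_base_comp_base]
    exact isBoundedNeg_piSingle hκ (σ γ) neg_one_lt_zero
  rel_of_code_ne_zero := by
    rintro _ a ⟨γ, rfl⟩ ha
    obtain rfl : a = base (σ γ) := (support_eval_base γ).subset ha
    exact baseRel_base_iff.2 (hlt γ)

end BaseChain

end SeriesCode

section Logarithm

variable {Γ : Type u} [LinearOrder Γ] {κ : Cardinal.{u}} {l : Γ → HahnSeries Γ ℝ}

/-- The logarithm `log (t^g) = ∑ γ, -g_γ t^{l γ}` induced by `l : Γ → G`, as a function of `g`. -/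
noncomputable def hahnLog (l : Γ → HahnSeries Γ ℝ) (g : HahnSeries Γ ℝ) : HahnSeries Γ ℝ → ℝ :=
  Function.extend l (-g.coeff) 0

theorem hahnLog_apply (hl : Function.Injective l) (g : HahnSeries Γ ℝ) (γ : Γ) :
    hahnLog l g (l γ) = -g.coeff γ :=
  hl.extend_apply _ _ γ

theorem hahnLog_comp (hl : Function.Injective l) (g : HahnSeries Γ ℝ) :
    hahnLog l g ∘ l = -g.coeff :=
  funext (hahnLog_apply hl g)

theorem hahnLog_of_notMem_range (g : HahnSeries Γ ℝ) {h : HahnSeries Γ ℝ} (hh : h ∉ Set.range l) :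
    hahnLog l g h = 0 :=
  Function.extend_apply' _ _ h hh

theorem support_hahnLog (hl : Function.Injective l) (g : HahnSeries Γ ℝ) :
    Function.support (hahnLog l g) = l '' g.support := by
  rw [hahnLog, Function.support_extend_zero hl, Function.support_neg, HahnSeries.support]

theorem support_hahnLog_subset_range (l : Γ → HahnSeries Γ ℝ) (g : HahnSeries Γ ℝ) :
    Function.support (hahnLog l g) ⊆ Set.range l :=
  Function.support_extend_zero_subset.trans (Set.image_subset_range _ _)

theorem hahnLog_injective (hl : Function.Injective l) : Function.Injective (hahnLog l) :=
  (Function.extend_injective hl (0 : HahnSeries Γ ℝ → ℝ)).comp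
    (neg_injective.comp HahnSeries.coeff_injective)

theorem hahnLog_add (l : Γ → HahnSeries Γ ℝ) (g g' : HahnSeries Γ ℝ) :
    hahnLog l (g + g') = hahnLog l g + hahnLog l g' := by
  rw [hahnLog, hahnLog, hahnLog, ← Function.extend_add, HahnSeries.coeff_add', neg_add, add_zero]

namespace IsGAIso

theorem injective (h : IsGAIso κ l) : Function.Injective l := by
  intro γ δ hγδ
  have not_hlt : ¬ hlt (l δ) (l δ) := h.hlt_iff.not.2 (lt_irrefl δ)
  have not_lt : ¬ γ < δ := by rwa [← h.hlt_iff, hγδ]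
  have not_gt : ¬ δ < γ := by rwa [← h.hlt_iff, hγδ]
  exact ((lt_trichotomy γ δ).resolve_left not_lt).resolve_right not_gt

theorem hahnLog_mem_NegK (h : IsGAIso κ l) {g : HahnSeries Γ ℝ} (hg : #g.support < κ) :
    hahnLog l g ∈ NegK κ Γ := by
  refine ⟨fun g' hg' => h.mem_range_iff.1 (support_hahnLog_subset_range l g hg'), ?_, ?_⟩
  · rw [support_hahnLog h.injective, Set.wellFoundedOn_image]
    exact g.isWF_support.mono' fun _ _ _ _ => h.hlt_iff.1
  · rw [support_hahnLog h.injective]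
    exact mk_image_le.trans_lt hg

theorem exists_hahnLog_eq (h : IsGAIso κ l) {F : HahnSeries Γ ℝ → ℝ} (hF : F ∈ NegK κ Γ) :
    ∃ g : HahnSeries Γ ℝ, #g.support < κ ∧ hahnLog l g = F := by
  obtain ⟨hneg, hwf, hcard⟩ := hF
  have himage : l '' Function.support (-(F ∘ l)) ⊆ Function.support F := by
    rw [Function.support_neg, Function.support_comp_eq_preimage]
    exact Set.image_preimage_subset _ _
  have hwf' : (Function.support (-(F ∘ l))).IsWF :=
    (Set.wellFoundedOn_image.1 (hwf.subset himage)).mono' fun _ _ _ _ => h.hlt_iff.2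
  refine ⟨⟨-(F ∘ l), hwf'.isPWO⟩, ?_, funext fun g => ?_⟩
  · rw [← mk_image_eq h.injective]
    exact (mk_le_mk_of_subset himage).trans_lt hcard
  · by_cases hg : g ∈ Set.range l
    · obtain ⟨γ, rfl⟩ := hg
      simp [hahnLog_apply h.injective]
    · rw [hahnLog_of_notMem_range _ hg]
      exact (Function.notMem_support.1 fun hF => hg (h.mem_range_iff.2 (hneg g hF))).symm

theorem hlt_iff_hlt2_hahnLog (h : IsGAIso κ l) {g g' : HahnSeries Γ ℝ} :
    hlt g' g ↔ hlt2 (hahnLog l g) (hahnLog l g') := by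
  rw [hlt2_iff_lexLT, ← lexLT_comp_iff (fun _ _ => h.hlt_iff) (support_hahnLog_subset_range l g)
    (support_hahnLog_subset_range l g'), hahnLog_comp h.injective, hahnLog_comp h.injective]
  simp only [hlt_iff_lexLT, Pi.Lex, Pi.neg_apply, neg_inj, neg_lt_neg_iff, eq_comm]

/-- The exponents of `log (t^{l γ})` are the `l δ` with `δ ∈ support (l γ)`, which exceed `l γ`. -/
theorem hahnLog_eq_zero_of_not_hlt (h : IsGAIso κ l) {γ : Γ} {g : HahnSeries Γ ℝ}
    (hg : ¬ hlt (l γ) g) : hahnLog l (l γ) g = 0 := by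
  by_contra hne
  obtain ⟨δ, hδ, rfl⟩ := (support_hahnLog h.injective (l γ)).subset hne
  exact hg (h.hlt_iff.2 (h.lt_of_coeff_ne_zero hδ))

theorem hlt2_nat_mul_hahnLog (h : IsGAIso κ l) (n : ℕ) {g : HahnSeries Γ ℝ} (hcard : #g.support < κ)
    (hneg : hlt g 0) : hlt2 (fun x => n * hahnLog l g x) fun x => if x = g then 1 else 0 := by
  obtain ⟨γ, rfl⟩ := h.mem_range_iff.2 ⟨hcard, hneg⟩
  have not_hlt_self : ¬ hlt (l γ) (l γ) := h.hlt_iff.not.2 (lt_irrefl γ)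
  refine ⟨l γ, ?_, fun b hb => ?_⟩
  · simp [h.hahnLog_eq_zero_of_not_hlt not_hlt_self]
  · have hne : b ≠ l γ := fun heq => not_hlt_self (heq ▸ hb)
    simp [h.hahnLog_eq_zero_of_not_hlt (hlt_asymm hb), hne]

theorem isGALexPower (h : IsGAIso κ l) {Γ₀ : Type*} [LinearOrder Γ₀] {e : Γ₀ → Γ}
    (he : StrictMono e) : IsGALexPower κ Γ₀ Γ := by
  refine ⟨⟨e, he⟩, l, fun γ => h.mem_range_iff.1 ⟨γ, rfl⟩, fun _ _ => h.hlt_iff.symm,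
    fun g hcard hneg => h.mem_range_iff.2 ⟨hcard, hneg⟩, ?_, fun g => hahnLog l g.1,
    fun g => hahnLog_apply h.injective g.1, fun g _ => hahnLog_of_notMem_range g.1,
    fun g => h.hahnLog_mem_NegK g.2, (hahnLog_injective h.injective).comp Subtype.val_injective,
    ?_, ?_, fun _ _ => h.hlt_iff_hlt2_hahnLog, fun n g => h.hlt2_nat_mul_hahnLog n g.2⟩
  · rintro g hcard hneg γ₀ hγ₀ -
    obtain ⟨γ, rfl⟩ := h.mem_range_iff.2 ⟨hcard, hneg⟩
    exact h.hlt_iff.2 (h.lt_of_coeff_ne_zero hγ₀)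
  · intro F hF
    obtain ⟨g, hg, rfl⟩ := h.exists_hahnLog_eq hF
    exact ⟨⟨g, hg⟩, rfl⟩
  · intro g g' g'' hadd x
    simp only [← hadd, hahnLog_add, Pi.add_apply]

end IsGAIso

end Logarithm

theorem exists_GA_left_logarithm_general {κ : Cardinal.{u}} (hκ : 1 < κ) {Γ₀ : Type u}
    [LinearOrder Γ₀] {σ : Γ₀ → Γ₀} (hmono : StrictMono σ) (hlt : ∀ γ, γ < σ γ) :
    ∃ (Γ : Type u) (li : LinearOrder Γ), @IsGALexPower κ Γ₀ Γ _ li := by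
  obtain ⟨p, hle, hmax⟩ :=
    (SeriesCode.baseChain (K := κ.out) hκ hmono hlt).exists_le_isMax
  have hcode (f : SeriesCode Γ₀ κ.out → ℝ) (hf : f ≠ 0) (hcard : #(Function.support f) < κ) :
      f ∈ Set.range (SeriesCode.eval σ) :=
    SeriesCode.mem_range_eval σ hf (by rw [mk_out]; exact hcard.le)
  have hbase : StrictMono fun γ => (⟨.base γ, hle.1 ⟨γ, rfl⟩⟩ : p.carrier) :=
    fun _ _ h => hle.2 _ _ (SeriesCode.baseRel_base_iff.2 h)
  exact ⟨p.carrier, inferInstance, (p.isGAIso_series_of_isMax hmax hcode).isGALexPower hbase⟩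

/-- **Construction of (GA)-left logarithms from increasing automorphisms.**
Let `κ` be regular uncountable and `Γ₀` a nonempty chain admitting an increasing
automorphism `σ₀`.  Then there are a chain `Γ ⊇ Γ₀` and an order isomorphism
`l : Γ → G^{<0}` (`G = (ℝ^Γ)_κ`) with `l(min support g) > g` for every
`g ∈ G^{<0}`; consequently `K = ℝ((G))_κ` admits a (GA)-left logarithm. -/
theorem exists_GA_left_logarithm
    (κ : Cardinal.{u}) (hreg : κ.IsRegular) (hunc : ℵ₀ < κ)
    (Γ₀ : Type u) [LinearOrder Γ₀] [Nonempty Γ₀]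
    (σ₀ : Γ₀ → Γ₀) (hbij : Function.Bijective σ₀) (hmono : StrictMono σ₀)
    (hinc : ∀ γ, γ < σ₀ γ) :
    ∃ (Γ : Type u) (li : LinearOrder Γ), @IsGALexPower κ Γ₀ Γ _ li := by
  exact exists_GA_left_logarithm_general (one_lt_aleph0.trans hunc) hmono hinc
end

section
/- Let I be a chain and {(Γ_i, τ_i) : i ∈ I} a collection of chains each endowed with an increasing automorphism τ_i. Let Γ = Σ_{i∈I} Γ_i be the lexicographic sum and τ the automorphism of Γ with τ|_{Γ_i} = τ_i. Then τ is an increasing automorphism of Γ and the rank of (Γ, τ) equals Σ_{i∈I} rank(Γ_i, τ_i): the quotient chain Γ/∼_τ is order isomorphic to the lexicographic sum Σ_{i∈I} (Γ_i/∼_{τ_i}). -/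
/-- `QuotIso la ra lb rb` says the quotient of the chain `(A, la)` by the (convex)
equivalence relation `ra` is order isomorphic to the quotient of `(B, lb)` by `rb`. -/
def QuotIso {A B : Type*} (la ra : A → A → Prop) (lb rb : B → B → Prop) : Prop :=
  ∃ F : A → B,
    (∀ x y, ra x y ↔ rb (F x) (F y)) ∧
    (∀ x y, la x y → ¬ ra x y → lb (F x) (F y)) ∧
    (∀ b, ∃ a, rb (F a) b)

/-- The equivalence relation obtained by iterating an increasing map `f`:
`x ∼ y` iff some iterate of `f` at `x` passes `y` and vice versa. -/
def simIter {A : Type*} (le : A → A → Prop) (f : A → A) (x y : A) : Prop :=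
  ∃ n : ℕ, le y (f^[n] x) ∧ le x (f^[n] y)

/-- The strict lexicographic order on the lexicographic sum `Σ_{i∈I} Γ i`. -/
def lexLt {I : Type*} [LinearOrder I] {Γ : I → Type*} [∀ i, LinearOrder (Γ i)]
    (a b : Σ i, Γ i) : Prop :=
  a.1 < b.1 ∨ ∃ h : a.1 = b.1, h ▸ a.2 < b.2

/-- The associated non-strict order. -/
def lexLe {I : Type*} [LinearOrder I] {Γ : I → Type*} [∀ i, LinearOrder (Γ i)]
    (a b : Σ i, Γ i) : Prop :=
  lexLt a b ∨ a = b

/-- The componentwise map `Σ_{i∈I} Γ i → Σ_{i∈I} Γ i` built from maps `τ i`. -/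
def sigmaMap {I : Type*} {Γ : I → Type*} (τ : ∀ i, Γ i → Γ i) (a : Σ i, Γ i) : Σ i, Γ i :=
  ⟨a.1, τ a.1 a.2⟩

/-!
The map `sigmaMap τ` never leaves a summand. Hence, if iterates of it carry `a` past `b` and `b`
past `a`, then the index of each is at most that of the other, so `a` and `b` lie in a common
summand, where `sigmaMap τ` acts as `τ i`. The relation on the sum is therefore the disjoint union
of the relations on the summands, and the identity map induces the isomorphism of the quotients.
-/

instance simIter.instRefl {A : Type*} (le : A → A → Prop) [Std.Refl le] (f : A → A) :
    Std.Refl (simIter le f) where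
  refl x := ⟨0, refl_of le x, refl_of le x⟩

theorem quotIso_of_iff {A : Type*} (l : A → A → Prop) {r s : A → A → Prop} [Std.Refl r]
    (h : ∀ x y, r x y ↔ s x y) : QuotIso l r l s :=
  ⟨id, h, fun _ _ hl _ ↦ hl, fun b ↦ ⟨b, (h b b).1 (refl_of r b)⟩⟩

section Sigma

variable {I : Type*} {Γ : I → Type*} {τ : ∀ i, Γ i → Γ i}

theorem sigmaMap_bijective (hτ : ∀ i, Function.Bijective (τ i)) :
    Function.Bijective (sigmaMap τ) :=
  ⟨Function.injective_id.sigma_map fun i ↦ (hτ i).injective,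
    Function.surjective_id.sigma_map fun i ↦ (hτ i).surjective⟩

variable (τ) in
theorem sigmaMap_iterate (n : ℕ) : (sigmaMap τ)^[n] = sigmaMap fun i ↦ (τ i)^[n] := by
  induction n with
  | zero => rfl
  | succ n ih => rw [Function.iterate_succ, ih]; rfl

end Sigma

section LexicographicSum

variable {I : Type*} [LinearOrder I] {Γ : I → Type*} [∀ i, LinearOrder (Γ i)]
  {τ : ∀ i, Γ i → Γ i}

theorem lexLt_mk_iff {i : I} {x y : Γ i} : lexLt (Sigma.mk i x) ⟨i, y⟩ ↔ x < y := by
  simp [lexLt]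

theorem lexLe_mk_iff {i : I} {x y : Γ i} : lexLe (Sigma.mk i x) ⟨i, y⟩ ↔ x ≤ y := by
  simp [lexLe, lexLt_mk_iff, le_iff_lt_or_eq]

theorem lexLe.fst_le {a b : Σ i, Γ i} (h : lexLe a b) : a.1 ≤ b.1 := by
  obtain (hlt | ⟨heq, -⟩) | rfl := h
  exacts [hlt.le, heq.le, le_rfl]

instance lexLe.instRefl : Std.Refl (lexLe (Γ := Γ)) where
  refl _ := Or.inr rfl

theorem lexLt_sigmaMap_iff (hτ : ∀ i, StrictMono (τ i)) (a b : Σ i, Γ i) :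
    lexLt (sigmaMap τ a) (sigmaMap τ b) ↔ lexLt a b := by
  obtain ⟨i, x⟩ := a
  obtain ⟨j, y⟩ := b
  refine or_congr_right (exists_congr ?_)
  rintro (rfl : i = j)
  exact (hτ i).lt_iff_lt

theorem lexLt_sigmaMap_self {a : Σ i, Γ i} (h : a.2 < τ a.1 a.2) : lexLt a (sigmaMap τ a) :=
  lexLt_mk_iff.2 h

theorem fst_eq_of_simIter_sigmaMap {a b : Σ i, Γ i} (h : simIter lexLe (sigmaMap τ) a b) :
    a.1 = b.1 := by
  obtain ⟨n, hba, hab⟩ := h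
  rw [sigmaMap_iterate] at hba hab
  exact le_antisymm hab.fst_le hba.fst_le

theorem simIter_sigmaMap_mk_iff {i : I} {x y : Γ i} :
    simIter lexLe (sigmaMap τ) ⟨i, x⟩ ⟨i, y⟩ ↔ simIter (· ≤ ·) (τ i) x y := by
  simp only [simIter, sigmaMap_iterate, sigmaMap, lexLe_mk_iff]

variable (τ) in
theorem simIter_sigmaMap_iff (a b : Σ i, Γ i) :
    simIter lexLe (sigmaMap τ) a b ↔
      ∃ h : a.1 = b.1, simIter (· ≤ ·) (τ b.1) (h ▸ a.2) b.2 := by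
  obtain ⟨i, x⟩ := a
  obtain ⟨j, y⟩ := b
  constructor
  · intro h
    obtain rfl : i = j := fst_eq_of_simIter_sigmaMap h
    exact ⟨rfl, simIter_sigmaMap_mk_iff.1 h⟩
  · rintro ⟨rfl : i = j, h⟩
    exact simIter_sigmaMap_mk_iff.2 h

end LexicographicSum

/-- **Additivity of the rank over lexicographic sums.**  Let `I` be a chain and
`(Γ i, τ i)` a family of chains with increasing automorphisms.  Then the
componentwise map `τ` on the lexicographic sum `Γ = Σ_{i∈I} Γ i` is an increasing
automorphism, two points are `τ`-equivalent iff they lie in the same summand and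
are `τ i`-equivalent there, and consequently the quotient chain `Γ/∼_τ` is order
isomorphic to the lexicographic sum `Σ_{i∈I} (Γ i/∼_{τ i})` of the quotients. -/
theorem rank_of_lexicographic_sum
    {I : Type*} [LinearOrder I] (Γ : I → Type*) [∀ i, LinearOrder (Γ i)]
    (τ : ∀ i, Γ i → Γ i)
    (hbij : ∀ i, Function.Bijective (τ i)) (hmono : ∀ i, StrictMono (τ i))
    (hinc : ∀ i x, x < τ i x) :
    -- τ is an increasing automorphism of the lexicographic sum
    Function.Bijective (sigmaMap τ) ∧
    (∀ a b, lexLt a b ↔ lexLt (sigmaMap τ a) (sigmaMap τ b)) ∧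
    (∀ a, lexLt a (sigmaMap τ a)) ∧
    -- its equivalence classes are the classes of the summands
    (∀ a b : Σ i, Γ i, simIter lexLe (sigmaMap τ) a b ↔
      ∃ h : a.1 = b.1, simIter (· ≤ ·) (τ b.1) (h ▸ a.2) b.2) ∧
    -- hence the rank of (Γ, τ) is the lexicographic sum of the ranks of (Γ i, τ i)
    QuotIso lexLt (simIter lexLe (sigmaMap τ)) lexLt
      (fun a b : Σ i, Γ i => ∃ h : a.1 = b.1, simIter (· ≤ ·) (τ b.1) (h ▸ a.2) b.2) := by
  exact ⟨sigmaMap_bijective hbij,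
    fun a b ↦ (lexLt_sigmaMap_iff hmono a b).symm,
    fun a ↦ lexLt_sigmaMap_self (hinc a.1 a.2),
    simIter_sigmaMap_iff τ,
    quotIso_of_iff lexLt (simIter_sigmaMap_iff τ)⟩
end
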